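/- Invariance of the spinning-particle equation (35) under the prolonged pseudo-orthogonal generators: let 𝐄 be given by equation (35) of the context, regarded as a smooth ℝ³-valued function of (s⁰, 𝐬, v, v′, v″) on the domain {(s⁰,𝐬) ≠ 0, Δ(v) > 0}. For a fixed pair (𝐧, 𝐪) ∈ ℝ³ × ℝ³ define the first-order differential operator X₃ (the third-order prolongation of the pseudo-orthogonal generator, acting also on the spin parameters) componentwise by X₃F = −(𝐪·𝐬) ∂_{s⁰}F + (s⁰𝐪 + 𝐧×𝐬)·∂_𝐬 F + (𝐪 + (𝐪·v)v + 𝐧×v)·∂_v F + ((𝐪·v′)v + 2(𝐪·v)v′ + 𝐧×v′)·∂_{v′} F + ((𝐪·v″)v + 3(𝐪·v′)v′ + 3(𝐪·v)v″ + 𝐧×v″)·∂_{v″} F. Then on its domain 𝐄 satisfies the identity X₃𝐄 = 𝐧×𝐄 + (𝐪·v) 𝐄 − (v·𝐄) 𝐪. -/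

import Mathlib

open Matrix

noncomputable section

/-- `Δ(v) = (1 + v·v)(s⁰² + 𝐬·𝐬) − (s⁰ + 𝐬·v)²`. -/
def sDelta (s0 : ℝ) (s v : Fin 3 → ℝ) : ℝ :=
  (1 + v ⬝ᵥ v) * (s0 ^ 2 + s ⬝ᵥ s) - (s0 + s ⬝ᵥ v) ^ 2

/-- The third-order expression (35) of the semi-classical spinning particle. -/
def spinE (s0 : ℝ) (s : Fin 3 → ℝ) (m : ℝ) (v v' v'' : Fin 3 → ℝ) : Fin 3 → ℝ :=
  (sDelta s0 s v ^ ((3 : ℝ) / 2))⁻¹ • crossProduct v'' (s - s0 • v)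
    - (3 * ((s0 ^ 2 + s ⬝ᵥ s) * (v' ⬝ᵥ v) - (s0 + s ⬝ᵥ v) * (s ⬝ᵥ v'))
        / sDelta s0 s v ^ ((5 : ℝ) / 2)) • crossProduct v' (s - s0 • v)
    + (m / ((1 + v ⬝ᵥ v) ^ ((3 : ℝ) / 2) * (s0 ^ 2 + s ⬝ᵥ s) ^ ((3 : ℝ) / 2))) •
        ((1 + v ⬝ᵥ v) • v' - (v' ⬝ᵥ v) • v)

/-- The value at the point `(s⁰, 𝐬, v, v′, v″)` of the vector field generating the
third-order prolongation `X₃` (formula (37)) of the pseudo-orthogonal generator with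
group parameters `(𝐧, 𝐪)`, acting also on the spin parameters. -/
def X3vec (n q : Fin 3 → ℝ)
    (p : ℝ × (Fin 3 → ℝ) × (Fin 3 → ℝ) × (Fin 3 → ℝ) × (Fin 3 → ℝ)) :
    ℝ × (Fin 3 → ℝ) × (Fin 3 → ℝ) × (Fin 3 → ℝ) × (Fin 3 → ℝ) :=
  ⟨-(q ⬝ᵥ p.2.1),
   p.1 • q + crossProduct n p.2.1,
   q + (q ⬝ᵥ p.2.2.1) • p.2.2.1 + crossProduct n p.2.2.1,
   (q ⬝ᵥ p.2.2.2.1) • p.2.2.1 + (2 * (q ⬝ᵥ p.2.2.1)) • p.2.2.2.1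
     + crossProduct n p.2.2.2.1,
   (q ⬝ᵥ p.2.2.2.2) • p.2.2.1 + (3 * (q ⬝ᵥ p.2.2.2.1)) • p.2.2.2.1
     + (3 * (q ⬝ᵥ p.2.2.1)) • p.2.2.2.2 + crossProduct n p.2.2.2.2⟩

theorem hasDerivAt_dot3 {a b : ℝ → Fin 3 → ℝ} {a' b' : Fin 3 → ℝ} {t : ℝ}
    (ha : HasDerivAt a a' t) (hb : HasDerivAt b b' t) :
    HasDerivAt (fun t => a t ⬝ᵥ b t) (a' ⬝ᵥ b t + a t ⬝ᵥ b') t := by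
  have ha := hasDerivAt_pi.1 ha
  have hb := hasDerivAt_pi.1 hb
  simp only [dotProduct, Fin.sum_univ_three]
  refine HasDerivAt.congr_deriv ((((ha 0).mul (hb 0)).add ((ha 1).mul (hb 1))).add ((ha 2).mul (hb 2))) ?_
  ring

theorem hasDerivAt_cross3 {a b : ℝ → Fin 3 → ℝ} {a' b' : Fin 3 → ℝ} {t : ℝ}
    (ha : HasDerivAt a a' t) (hb : HasDerivAt b b' t) :
    HasDerivAt (fun t => crossProduct (a t) (b t))
      (crossProduct a' (b t) + crossProduct (a t) b') t := by
  have ha := hasDerivAt_pi.1 ha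
  have hb := hasDerivAt_pi.1 hb
  refine hasDerivAt_pi.2 fun i => ?_
  fin_cases i
  · simp only [cross_apply]
    refine HasDerivAt.congr_deriv (((ha 1).mul (hb 2)).sub ((ha 2).mul (hb 1))) ?_
    simp
    ring
  · simp only [cross_apply]
    refine HasDerivAt.congr_deriv (((ha 2).mul (hb 0)).sub ((ha 0).mul (hb 2))) ?_
    simp
    ring
  · simp only [cross_apply]
    refine HasDerivAt.congr_deriv (((ha 0).mul (hb 1)).sub ((ha 1).mul (hb 0))) ?_
    simp
    ring

theorem differentiable_dot3 {E : Type*} [NormedAddCommGroup E] [NormedSpace ℝ E]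
    {a b : E → Fin 3 → ℝ} (ha : Differentiable ℝ a) (hb : Differentiable ℝ b) :
    Differentiable ℝ (fun t => a t ⬝ᵥ b t) := by
  have ha := differentiable_pi.1 ha
  have hb := differentiable_pi.1 hb
  simp only [dotProduct, Fin.sum_univ_three]
  exact (((ha 0).mul (hb 0)).add ((ha 1).mul (hb 1))).add ((ha 2).mul (hb 2))

theorem differentiable_cross3 {E : Type*} [NormedAddCommGroup E] [NormedSpace ℝ E]
    {a b : E → Fin 3 → ℝ} (ha : Differentiable ℝ a) (hb : Differentiable ℝ b) :
    Differentiable ℝ (fun t => crossProduct (a t) (b t)) := by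
  have ha := differentiable_pi.1 ha
  have hb := differentiable_pi.1 hb
  refine differentiable_pi.2 fun i => ?_
  fin_cases i
  · simp only [cross_apply]
    exact ((ha 1).mul (hb 2)).sub ((ha 2).mul (hb 1))
  · simp only [cross_apply]
    exact ((ha 2).mul (hb 0)).sub ((ha 0).mul (hb 2))
  · simp only [cross_apply]
    exact ((ha 0).mul (hb 1)).sub ((ha 1).mul (hb 0))

theorem one_add_dot_pos (v : Fin 3 → ℝ) : 0 < 1 + v ⬝ᵥ v := by
  simp only [dotProduct, Fin.sum_univ_three]
  nlinarith [mul_self_nonneg (v 0), mul_self_nonneg (v 1), mul_self_nonneg (v 2)]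

theorem spin_norm_pos {s0 : ℝ} {s v : Fin 3 → ℝ} (hΔ : 0 < sDelta s0 s v) :
    0 < s0 ^ 2 + s ⬝ᵥ s := by
  have h1 := one_add_dot_pos v
  unfold sDelta at hΔ
  by_contra h
  push Not at h
  nlinarith [sq_nonneg (s0 + s ⬝ᵥ v)]

theorem differentiableAt_spinE (m : ℝ) (s0 : ℝ) (s v v' v'' : Fin 3 → ℝ)
    (hΔ : 0 < sDelta s0 s v) :
    DifferentiableAt ℝ
      (fun p : ℝ × (Fin 3 → ℝ) × (Fin 3 → ℝ) × (Fin 3 → ℝ) × (Fin 3 → ℝ) =>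
        spinE p.1 p.2.1 m p.2.2.1 p.2.2.2.1 p.2.2.2.2)
      (s0, s, v, v', v'') := by
  have hA := one_add_dot_pos v
  have hB := spin_norm_pos hΔ
  have d0 : Differentiable ℝ
      (fun p : ℝ × (Fin 3 → ℝ) × (Fin 3 → ℝ) × (Fin 3 → ℝ) × (Fin 3 → ℝ) => p.1) := by fun_prop
  have d1 : Differentiable ℝ
      (fun p : ℝ × (Fin 3 → ℝ) × (Fin 3 → ℝ) × (Fin 3 → ℝ) × (Fin 3 → ℝ) => p.2.1) := by fun_prop
  have d2 : Differentiable ℝ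
      (fun p : ℝ × (Fin 3 → ℝ) × (Fin 3 → ℝ) × (Fin 3 → ℝ) × (Fin 3 → ℝ) => p.2.2.1) := by
    fun_prop
  have d3 : Differentiable ℝ
      (fun p : ℝ × (Fin 3 → ℝ) × (Fin 3 → ℝ) × (Fin 3 → ℝ) × (Fin 3 → ℝ) => p.2.2.2.1) := by
    fun_prop
  have d4 : Differentiable ℝ
      (fun p : ℝ × (Fin 3 → ℝ) × (Fin 3 → ℝ) × (Fin 3 → ℝ) × (Fin 3 → ℝ) => p.2.2.2.2) := by
    fun_prop
  have dA := (differentiable_const (1 : ℝ)).add (differentiable_dot3 d2 d2)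
  have dB := (d0.pow 2).add (differentiable_dot3 d1 d1)
  have dS := d0.add (differentiable_dot3 d1 d2)
  have dD := (dA.mul dB).sub (dS.pow 2)
  have dC := ((dB.mul (differentiable_dot3 d3 d2)).sub
    (dS.mul (differentiable_dot3 d1 d3))).const_mul (3 : ℝ)
  have dU := d1.sub (d0.smul d2)
  have e3 := (dD (s0, s, v, v', v'')).rpow_const (p := (3 : ℝ) / 2) (Or.inl hΔ.ne')
  have e5 := (dD (s0, s, v, v', v'')).rpow_const (p := (5 : ℝ) / 2) (Or.inl hΔ.ne')
  have eA := (dA (s0, s, v, v', v'')).rpow_const (p := (3 : ℝ) / 2) (Or.inl hA.ne')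
  have eB := (dB (s0, s, v, v', v'')).rpow_const (p := (3 : ℝ) / 2) (Or.inl hB.ne')
  have n3 := (Real.rpow_pos_of_pos hΔ ((3 : ℝ) / 2)).ne'
  have n5 := (Real.rpow_pos_of_pos hΔ ((5 : ℝ) / 2)).ne'
  have nA := (Real.rpow_pos_of_pos hA ((3 : ℝ) / 2)).ne'
  have nB := (Real.rpow_pos_of_pos hB ((3 : ℝ) / 2)).ne'
  have e5' := (dC (s0, s, v, v', v'')).mul (e5.inv n5)
  have eAB := (eA.mul eB).inv (mul_ne_zero nA nB)
  exact (((e3.inv n3).smul (differentiable_cross3 d4 dU _)).sub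
    (e5'.smul (differentiable_cross3 d3 dU _))).add
    ((eAB.const_mul m).smul
      (((dA.smul d3).sub ((differentiable_dot3 d3 d2).smul d2)) (s0, s, v, v', v'')))

/-- derivative of a `3/2`-power along a direction where the base scales. -/
theorem hasDerivAt_rpow_scale {f : ℝ → ℝ} {t k r : ℝ} (hf : HasDerivAt f (k * f t) t)
    (h : 0 < f t) : HasDerivAt (fun t => f t ^ r) (r * k * f t ^ r) t := by
  refine HasDerivAt.congr_deriv (hf.rpow_const (p := r) (Or.inl h.ne')) ?_
  rw [Real.rpow_sub_one h.ne']
  field_simp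

/-- Invariance of the spinning-particle equation (35) under the
prolonged pseudo-orthogonal generators: on the domain `{(s⁰,𝐬) ≠ 0, Δ(v) > 0}` the
expression `𝐄` of (35), viewed as a function of `(s⁰, 𝐬, v, v′, v″)`, satisfies
`X₃𝐄 = 𝐧×𝐄 + (𝐪·v) 𝐄 − (v·𝐄) 𝐪` for every choice of group parameters `(𝐧, 𝐪)`. -/
theorem spinning_particle_equation_invariance (m : ℝ) (n q : Fin 3 → ℝ)
    (s0 : ℝ) (s v v' v'' : Fin 3 → ℝ)
    (hs : (s0, s) ≠ 0) (hΔ : 0 < sDelta s0 s v) :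
    fderiv ℝ
      (fun p : ℝ × (Fin 3 → ℝ) × (Fin 3 → ℝ) × (Fin 3 → ℝ) × (Fin 3 → ℝ) =>
        spinE p.1 p.2.1 m p.2.2.1 p.2.2.2.1 p.2.2.2.2)
      (s0, s, v, v', v'') (X3vec n q (s0, s, v, v', v''))
      = crossProduct n (spinE s0 s m v v' v'')
        + (q ⬝ᵥ v) • spinE s0 s m v v' v''
        - (v ⬝ᵥ spinE s0 s m v v' v'') • q := by
  have hA := one_add_dot_pos v
  have hB := spin_norm_pos hΔ
  rw [← (differentiableAt_spinE m s0 s v v' v'' hΔ).lineDeriv_eq_fderiv]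
  refine HasLineDerivAt.lineDeriv ?_
  unfold HasLineDerivAt
  have lin : ∀ {F : Type} [NormedAddCommGroup F] [NormedSpace ℝ F] (a b : F),
      HasDerivAt (fun t : ℝ => a + t • b) b 0 := by
    intro F _ _ a b
    simpa using ((hasDerivAt_id (0 : ℝ)).smul_const b).const_add a
  simp only [X3vec, Prod.smul_mk, Prod.mk_add_mk]
  generalize h0 : -(q ⬝ᵥ s) = w0
  generalize h1 : s0 • q + crossProduct n s = w1
  generalize h2 : q + (q ⬝ᵥ v) • v + crossProduct n v = w2
  generalize h3 : (q ⬝ᵥ v') • v + (2 * (q ⬝ᵥ v)) • v' + crossProduct n v' = w3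
  generalize h4 : (q ⬝ᵥ v'') • v + (3 * (q ⬝ᵥ v')) • v' + (3 * (q ⬝ᵥ v)) • v''
    + crossProduct n v'' = w4
  have l0 := lin s0 w0
  have l1 := lin s w1
  have l2 := lin v w2
  have l3 := lin v' w3
  have l4 := lin v'' w4
  generalize g0 : (fun t : ℝ => s0 + t • w0) = c0 at l0
  generalize g1 : (fun t : ℝ => s + t • w1) = c1 at l1
  generalize g2 : (fun t : ℝ => v + t • w2) = c2 at l2
  generalize g3 : (fun t : ℝ => v' + t • w3) = c3 at l3
  generalize g4 : (fun t : ℝ => v'' + t • w4) = c4 at l4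
  have z0 : c0 0 = s0 := by simp [← g0]
  have z1 : c1 0 = s := by simp [← g1]
  have z2 : c2 0 = v := by simp [← g2]
  have z3 : c3 0 = v' := by simp [← g3]
  have z4 : c4 0 = v'' := by simp [← g4]
  have k0 := fun t => congrFun g0 t
  have k1 := fun t => congrFun g1 t
  have k2 := fun t => congrFun g2 t
  have k3 := fun t => congrFun g3 t
  have k4 := fun t => congrFun g4 t
  simp only [k0, k1, k2, k3, k4]
  clear k0 k1 k2 k3 k4 g0 g1 g2 g3 g4 lin
  have dA : HasDerivAt (fun t => 1 + c2 t ⬝ᵥ c2 t)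
      ((2 * (q ⬝ᵥ v)) * (1 + c2 0 ⬝ᵥ c2 0)) 0 := by
    refine HasDerivAt.congr_deriv ((hasDerivAt_dot3 l2 l2).const_add 1) ?_
    rw [z2, ← h2]
    simp [dotProduct, Fin.sum_univ_three, cross_apply]
    ring
  have dB : HasDerivAt (fun t => c0 t ^ 2 + c1 t ⬝ᵥ c1 t)
      (0 * (c0 0 ^ 2 + c1 0 ⬝ᵥ c1 0)) 0 := by
    refine HasDerivAt.congr_deriv ((l0.pow 2).add (hasDerivAt_dot3 l1 l1)) ?_
    rw [z0, z1, ← h0, ← h1]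
    simp [dotProduct, Fin.sum_univ_three, cross_apply]
    ring
  have dS : HasDerivAt (fun t => c0 t + c1 t ⬝ᵥ c2 t)
      ((q ⬝ᵥ v) * (s0 + s ⬝ᵥ v)) 0 := by
    refine HasDerivAt.congr_deriv (l0.add (hasDerivAt_dot3 l1 l2)) ?_
    rw [z1, z2, ← h0, ← h1, ← h2]
    simp [dotProduct, Fin.sum_univ_three, cross_apply]
    ring
  have dD : HasDerivAt (fun t => sDelta (c0 t) (c1 t) (c2 t))
      ((2 * (q ⬝ᵥ v)) * sDelta (c0 0) (c1 0) (c2 0)) 0 := by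
    unfold sDelta
    refine HasDerivAt.congr_deriv ((dA.mul dB).sub (dS.pow 2)) ?_
    simp only [z0, z1, z2]
    push_cast
    ring
  have dV : HasDerivAt (fun t => c3 t ⬝ᵥ c2 t)
      ((q ⬝ᵥ v') * (1 + v ⬝ᵥ v) + 3 * (q ⬝ᵥ v) * (v' ⬝ᵥ v)) 0 := by
    refine HasDerivAt.congr_deriv (hasDerivAt_dot3 l3 l2) ?_
    rw [z3, z2, ← h3, ← h2]
    simp [dotProduct, Fin.sum_univ_three, cross_apply]
    ring
  have dW : HasDerivAt (fun t => c1 t ⬝ᵥ c3 t)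
      ((q ⬝ᵥ v') * (s0 + s ⬝ᵥ v) + 2 * (q ⬝ᵥ v) * (s ⬝ᵥ v')) 0 := by
    refine HasDerivAt.congr_deriv (hasDerivAt_dot3 l1 l3) ?_
    rw [z3, z1, ← h3, ← h1]
    simp [dotProduct, Fin.sum_univ_three, cross_apply]
    ring
  have dC : HasDerivAt (fun t => 3 * ((c0 t ^ 2 + c1 t ⬝ᵥ c1 t) * (c3 t ⬝ᵥ c2 t)
        - (c0 t + c1 t ⬝ᵥ c2 t) * (c1 t ⬝ᵥ c3 t)))
      (3 * ((q ⬝ᵥ v') * sDelta s0 s v + 3 * (q ⬝ᵥ v) * ((s0 ^ 2 + s ⬝ᵥ s) * (v' ⬝ᵥ v)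
        - (s0 + s ⬝ᵥ v) * (s ⬝ᵥ v')))) 0 := by
    refine HasDerivAt.congr_deriv (((dB.mul dV).sub (dS.mul dW)).const_mul 3) ?_
    simp only [z0, z1, z2, z3, sDelta]
    ring
  have dU : HasDerivAt (fun t => c1 t - c0 t • c2 t)
      ((q ⬝ᵥ (s - s0 • v)) • v + crossProduct n (s - s0 • v)) 0 := by
    refine HasDerivAt.congr_deriv (l1.sub (l0.smul l2)) ?_
    rw [z0, z2, ← h0, ← h1, ← h2]
    ext i
    fin_cases i <;> simp [dotProduct, Fin.sum_univ_three, cross_apply, vecHead, vecTail] <;> ring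
  have dX : HasDerivAt (fun t => crossProduct (c4 t) (c1 t - c0 t • c2 t))
      (crossProduct n (crossProduct v'' (s - s0 • v))
        + (4 * (q ⬝ᵥ v)) • crossProduct v'' (s - s0 • v)
        - (v ⬝ᵥ crossProduct v'' (s - s0 • v)) • q
        + (3 * (q ⬝ᵥ v')) • crossProduct v' (s - s0 • v)) 0 := by
    refine HasDerivAt.congr_deriv (hasDerivAt_cross3 l4 dU) ?_
    rw [z0, z1, z2, z4, ← h4]
    generalize s - s0 • v = u
    ext i
    fin_cases i <;> simp [dotProduct, Fin.sum_univ_three, cross_apply, vecHead, vecTail] <;> ring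
  have dY : HasDerivAt (fun t => crossProduct (c3 t) (c1 t - c0 t • c2 t))
      (crossProduct n (crossProduct v' (s - s0 • v))
        + (3 * (q ⬝ᵥ v)) • crossProduct v' (s - s0 • v)
        - (v ⬝ᵥ crossProduct v' (s - s0 • v)) • q) 0 := by
    refine HasDerivAt.congr_deriv (hasDerivAt_cross3 l3 dU) ?_
    rw [z0, z1, z2, z3, ← h3]
    generalize s - s0 • v = u
    ext i
    fin_cases i <;> simp [dotProduct, Fin.sum_univ_three, cross_apply, vecHead, vecTail] <;> ring
  have dZ : HasDerivAt (fun t => (1 + c2 t ⬝ᵥ c2 t) • c3 t - (c3 t ⬝ᵥ c2 t) • c2 t)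
      (crossProduct n ((1 + v ⬝ᵥ v) • v' - (v' ⬝ᵥ v) • v)
        + (4 * (q ⬝ᵥ v)) • ((1 + v ⬝ᵥ v) • v' - (v' ⬝ᵥ v) • v)
        - (v ⬝ᵥ ((1 + v ⬝ᵥ v) • v' - (v' ⬝ᵥ v) • v)) • q) 0 := by
    refine HasDerivAt.congr_deriv ((dA.smul l3).sub (dV.smul l2)) ?_
    rw [z2, z3, ← h3, ← h2]
    ext i
    fin_cases i <;> simp [dotProduct, Fin.sum_univ_three, cross_apply, vecHead, vecTail] <;> ring
  have hΔ0 : 0 < sDelta (c0 0) (c1 0) (c2 0) := by rw [z0, z1, z2]; exact hΔ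
  have hA0 : 0 < 1 + c2 0 ⬝ᵥ c2 0 := by rw [z2]; exact hA
  have hB0 : 0 < c0 0 ^ 2 + c1 0 ⬝ᵥ c1 0 := by rw [z0, z1]; exact hB
  have e3 := hasDerivAt_rpow_scale (r := (3 : ℝ) / 2) dD hΔ0
  have e5 := hasDerivAt_rpow_scale (r := (5 : ℝ) / 2) dD hΔ0
  have eA := hasDerivAt_rpow_scale (r := (3 : ℝ) / 2) dA hA0
  have eB := hasDerivAt_rpow_scale (r := (3 : ℝ) / 2) dB hB0
  have n3 := (Real.rpow_pos_of_pos hΔ0 ((3 : ℝ) / 2)).ne'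
  have n5 := (Real.rpow_pos_of_pos hΔ0 ((5 : ℝ) / 2)).ne'
  have nA := (Real.rpow_pos_of_pos hA0 ((3 : ℝ) / 2)).ne'
  have nB := (Real.rpow_pos_of_pos hB0 ((3 : ℝ) / 2)).ne'
  have main := (((e3.inv n3).smul dX).sub ((dC.mul (e5.inv n5)).smul dY)).add
    ((((eA.mul eB).inv (mul_ne_zero nA nB)).const_mul m).smul dZ)
  have p53 : sDelta s0 s v ^ ((5 : ℝ) / 2)
      = sDelta s0 s v * sDelta s0 s v ^ ((3 : ℝ) / 2) := by
    rw [show (5 : ℝ) / 2 = 1 + 3 / 2 by norm_num, Real.rpow_add hΔ, Real.rpow_one]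
  unfold spinE
  refine HasDerivAt.congr_deriv main ?_
  simp only [Pi.inv_apply, Pi.mul_apply, Pi.div_apply, z0, z1, z2, z3, z4] at n3 n5 nA nB ⊢
  simp only [p53] at n5 ⊢
  generalize (s0 ^ 2 + s ⬝ᵥ s) * (v' ⬝ᵥ v) - (s0 + s ⬝ᵥ v) * (s ⬝ᵥ v') = C
  generalize crossProduct v'' (s - s0 • v) = X
  generalize crossProduct v' (s - s0 • v) = Y
  generalize (1 + v ⬝ᵥ v) • v' - (v' ⬝ᵥ v) • v = Z
  generalize sDelta s0 s v ^ ((3 : ℝ) / 2) = P at *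
  generalize (1 + v ⬝ᵥ v) ^ ((3 : ℝ) / 2) = a at *
  generalize (s0 ^ 2 + s ⬝ᵥ s) ^ ((3 : ℝ) / 2) = b at *
  have hD := hΔ.ne'
  generalize sDelta s0 s v = D at *
  simp only [map_add, map_sub, map_smul, dotProduct_add, dotProduct_sub, dotProduct_smul,
    smul_eq_mul]
  generalize crossProduct n X = nX
  generalize crossProduct n Y = nY
  generalize crossProduct n Z = nZ
  generalize v ⬝ᵥ X = vX
  generalize v ⬝ᵥ Y = vY
  generalize v ⬝ᵥ Z = vZ
  generalize q ⬝ᵥ v = k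
  generalize q ⬝ᵥ v' = k'
  ext i
  simp only [Pi.add_apply, Pi.sub_apply, Pi.smul_apply, smul_eq_mul]
  field_simp
  ring

end
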